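/- Let 0 < ε < 1/2 and let f : ℝ → ℂ be defined by f̂(ξ) = e^{50iξ}(1+ξ²)^{-1/4}(1+log(1+ξ²))^{-2}. Then the function g with ĝ(ξ) = (1+ξ²)^{ε/2} f̂(ξ) satisfies: for every open interval (c,d) containing -50, ∫_c^d |g(x)|² dx = ∞. -/

import Mathlib

open MeasureTheory Real Filter Complex

/-!
Put `a = 1/4 - ε/2` and `h ξ = (1 + ξ²)^(-a) (1 + log (1 + ξ²))^(-2)`, which is even and decreases
to `0` on `[0, ∞)`. Integrating by parts, `G y = 2π g (y - 50)` satisfies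
`y G(y) = P(y) := ∫ sin (yξ) (-h' ξ) dξ`, so that `∫₀^r P = ∫ (1 - cos (rξ)) / ξ * (-h' ξ) dξ` has
a nonnegative integrand. For `r = 1/x`, the block `[x, 2x]` alone contributes at least
`(2 / π²) (h x - h (2x)) / x`. If `G` were square-integrable near `0`, then
`∫₀^r y |G(y)| dy = O(r^(3/2))`, hence `h x - h (2x) = O(x^(-1/2))`, and summing over dyadic scales
`h x = O(x^(-1/2))`. This is false because `a < 1/4`.
-/

open Set Asymptotics
open scoped Topology

section SineTransform

/-- The sine transform `y ↦ ∫ sin (yξ) k(ξ) dξ`, over the whole line and unnormalized. Applied to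
`k = -h'`, it is `y` times the Fourier integral of an even function `h`. -/
noncomputable def sineTransform (k : ℝ → ℝ) (y : ℝ) : ℝ := ∫ ξ, Real.sin (y * ξ) * k ξ

variable {k : ℝ → ℝ}

lemma integrable_sin_mul (hk : Integrable k) (y : ℝ) :
    Integrable fun ξ ↦ Real.sin (y * ξ) * k ξ :=
  hk.bdd_mul (by fun_prop) (.of_forall fun _ ↦ Real.abs_sin_le_one _)

lemma continuous_sineTransform (hk : Integrable k) : Continuous (sineTransform k) := by
  refine continuous_of_dominated (bound := fun ξ ↦ ‖k ξ‖)
    (fun y ↦ (integrable_sin_mul hk y).aestronglyMeasurable) (fun y ↦ .of_forall fun ξ ↦ ?_)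
    hk.norm (.of_forall fun ξ ↦ by fun_prop)
  rw [norm_mul]
  exact mul_le_of_le_one_left (norm_nonneg _) (Real.abs_sin_le_one _)

lemma integrable_uncurry_sin_mul (hk : Integrable k) (μ : Measure ℝ) [IsFiniteMeasure μ] :
    Integrable (Function.uncurry fun y ξ : ℝ ↦ Real.sin (y * ξ) * k ξ) (μ.prod volume) :=
  (hk.comp_snd μ).bdd_mul (f := fun z : ℝ × ℝ ↦ Real.sin (z.1 * z.2)) (by fun_prop)
    (.of_forall fun _ ↦ Real.abs_sin_le_one _)

lemma integral_sin_mul_const (r ξ : ℝ) :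
    ∫ y in 0..r, Real.sin (y * ξ) = (1 - Real.cos (r * ξ)) / ξ := by
  obtain rfl | hξ := eq_or_ne ξ 0
  · simp
  · rw [intervalIntegral.integral_comp_mul_right _ hξ, integral_sin]
    simp [div_eq_inv_mul]

lemma integrable_one_sub_cos_div_mul (hk : Integrable k) (r : ℝ) :
    Integrable fun ξ ↦ (1 - Real.cos (r * ξ)) / ξ * k ξ := by
  have h (s : Set ℝ) (hs : IsFiniteMeasure (volume.restrict s)) :
      Integrable fun ξ ↦ (∫ y in s, Real.sin (y * ξ)) * k ξ := by
    simpa only [Function.uncurry, integral_mul_const] using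
      (integrable_uncurry_sin_mul hk (volume.restrict s)).integral_prod_right
  simp_rw [← integral_sin_mul_const, intervalIntegral, sub_mul]
  exact (h _ inferInstance).sub (h _ inferInstance)

lemma integral_sineTransform (hk : Integrable k) (r : ℝ) :
    ∫ y in 0..r, sineTransform k y = ∫ ξ, (1 - Real.cos (r * ξ)) / ξ * k ξ := by
  have : IsFiniteMeasure (volume.restrict (uIoc 0 r)) := by
    unfold uIoc
    infer_instance
  simp only [sineTransform]
  rw [intervalIntegral_integral_swap (integrable_uncurry_sin_mul hk _)]
  simp only [intervalIntegral.integral_mul_const, integral_sin_mul_const]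

end SineTransform

section EvenAntitone

variable {h : ℝ → ℝ}

lemma odd_deriv_of_even (heven : h.Even) : (deriv h).Odd := fun ξ ↦ by
  have : (fun x ↦ h (-x)) = h := funext heven
  rw [← neg_eq_iff_eq_neg, ← deriv_comp_neg, this]

lemma deriv_nonpos_of_antitoneOn_Ici (hanti : AntitoneOn h (Ici 0)) {ξ : ℝ} (hξ : 0 < ξ) :
    deriv h ξ ≤ 0 := by
  rw [← derivWithin_of_mem_nhds (Ici_mem_nhds hξ)]
  exact hanti.derivWithin_nonpos

lemma integrable_deriv_of_even_of_antitoneOn (heven : h.Even) (hdiff : Differentiable ℝ h)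
    (hanti : AntitoneOn h (Ici 0)) {l : ℝ} (hlim : Tendsto h atTop (𝓝 l)) :
    Integrable (deriv h) := by
  have hpos : IntegrableOn (deriv h) (Ioi 0) :=
    integrableOn_Ioi_deriv_of_nonpos' (fun ξ _ ↦ (hdiff ξ).hasDerivAt)
      (fun _ hξ ↦ deriv_nonpos_of_antitoneOn_Ici hanti hξ) hlim
  have hneg : IntegrableOn (deriv h) (Iio 0) := by
    rw [← (Measure.measurePreserving_neg volume).integrableOn_comp_preimage
      (Homeomorph.neg ℝ).measurableEmbedding]
    simpa [Function.comp_def, odd_deriv_of_even heven _] using hpos.neg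
  rw [← integrableOn_univ, ← Iic_union_Ioi (a := (0 : ℝ))]
  exact (integrableOn_Iic_iff_integrableOn_Iio (by finiteness) |>.2 hneg).union hpos

lemma integral_cos_mul_eq_of_even (heven : h.Even) (hdiff : Differentiable ℝ h)
    (hint : Integrable (deriv h)) {y : ℝ} (hy : y ≠ 0) (R : ℝ) :
    ∫ ξ in -R..R, Real.cos (y * ξ) * h ξ =
      (2 * (Real.sin (y * R) * h R) + ∫ ξ in -R..R, Real.sin (y * ξ) * -deriv h ξ) / y := by
  have hcos : IntervalIntegrable (fun ξ ↦ y * (Real.cos (y * ξ) * h ξ)) volume (-R) R :=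
    (by have := hdiff.continuous; fun_prop : Continuous _).intervalIntegrable _ _
  have hsin : IntervalIntegrable (fun ξ ↦ Real.sin (y * ξ) * -deriv h ξ) volume (-R) R :=
    (integrable_sin_mul hint.neg y).intervalIntegrable
  have hderiv (ξ : ℝ) : HasDerivAt (fun ξ ↦ Real.sin (y * ξ) * h ξ)
      (y * (Real.cos (y * ξ) * h ξ) - Real.sin (y * ξ) * -deriv h ξ) ξ := by
    have := ((hasDerivAt_id ξ).const_mul y).sin.mul (hdiff ξ).hasDerivAt
    exact this.congr_deriv (by simp; ring)
  have hftc := intervalIntegral.integral_eq_sub_of_hasDerivAt (fun ξ _ ↦ hderiv ξ) (hcos.sub hsin)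
  rw [intervalIntegral.integral_sub hcos hsin, intervalIntegral.integral_const_mul, heven R,
    mul_neg, Real.sin_neg] at hftc
  rw [eq_div_iff hy]
  linarith

lemma tendsto_integral_cos_mul_of_even (heven : h.Even) (hdiff : Differentiable ℝ h)
    (hint : Integrable (deriv h)) (hlim : Tendsto h atTop (𝓝 0)) {y : ℝ} (hy : y ≠ 0) :
    Tendsto (fun R ↦ ∫ ξ in -R..R, Real.cos (y * ξ) * h ξ) atTop
      (𝓝 (sineTransform (-deriv h) y / y)) := by
  have hboundary : Tendsto (fun R ↦ Real.sin (y * R) * h R) atTop (𝓝 0) :=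
    bdd_le_mul_tendsto_zero' 1 (.of_forall fun _ ↦ Real.abs_sin_le_one _) hlim
  have hsin : Tendsto (fun R ↦ ∫ ξ in -R..R, Real.sin (y * ξ) * -deriv h ξ) atTop
      (𝓝 (sineTransform (-deriv h) y)) :=
    intervalIntegral_tendsto_integral (integrable_sin_mul hint.neg y) tendsto_neg_atTop_atBot
      tendsto_id
  simp_rw [integral_cos_mul_eq_of_even heven hdiff hint hy]
  simpa using ((hboundary.const_mul 2).add hsin).div_const y

lemma re_eq_sineTransform_div_of_tendsto (heven : h.Even) (hdiff : Differentiable ℝ h)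
    (hint : Integrable (deriv h)) (hlim : Tendsto h atTop (𝓝 0)) {y : ℝ} (hy : y ≠ 0) {z : ℂ}
    (hz : Tendsto (fun R : ℝ ↦ ∫ ξ in -R..R, cexp ((y * ξ : ℝ) * I) * h ξ) atTop (𝓝 z)) :
    z.re = sineTransform (-deriv h) y / y := by
  refine tendsto_nhds_unique (((continuous_re.tendsto z).comp hz).congr fun R ↦ ?_)
    (tendsto_integral_cos_mul_of_even heven hdiff hint hlim hy)
  have hcont : Continuous fun ξ : ℝ ↦ cexp ((y * ξ : ℝ) * I) * h ξ := by
    have := hdiff.continuous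
    fun_prop
  have hre := reCLM.intervalIntegral_comp_comm (hcont.intervalIntegrable (μ := volume) (-R) R)
  simpa only [Function.comp_apply, reCLM_apply, re_mul_ofReal, exp_ofReal_mul_I_re] using hre.symm

lemma one_sub_cos_div_mul_neg_deriv_nonneg (heven : h.Even) (hanti : AntitoneOn h (Ici 0))
    (r ξ : ℝ) : 0 ≤ (1 - Real.cos (r * ξ)) / ξ * -deriv h ξ := by
  have hcos : 0 ≤ 1 - Real.cos (r * ξ) := sub_nonneg.2 (Real.cos_le_one _)
  obtain hξ | rfl | hξ := lt_trichotomy ξ 0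
  · have := deriv_nonpos_of_antitoneOn_Ici hanti (neg_pos.2 hξ)
    rw [odd_deriv_of_even heven] at this
    exact mul_nonneg_of_nonpos_of_nonpos (div_nonpos_of_nonneg_of_nonpos hcos hξ.le) this
  · simp
  · exact mul_nonneg (div_nonneg hcos hξ.le)
      (neg_nonneg.2 (deriv_nonpos_of_antitoneOn_Ici hanti hξ))

lemma le_one_sub_cos_div {x ξ : ℝ} (hx : 0 < x) (hξ : ξ ∈ Icc x (2 * x)) :
    2 / (π ^ 2 * x) ≤ (1 - Real.cos (x⁻¹ * ξ)) / ξ := by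
  have hξ0 : 0 < ξ := hx.trans_le hξ.1
  have habs : |x⁻¹ * ξ| ≤ π := by
    rw [abs_of_pos (by positivity), inv_mul_le_iff₀ hx]
    nlinarith [hξ.2, Real.pi_gt_three]
  have hcos := Real.cos_le_one_sub_mul_cos_sq habs
  calc 2 / (π ^ 2 * x) = 2 / (π ^ 2 * x ^ 2) * x := by field_simp
    _ ≤ 2 / (π ^ 2 * x ^ 2) * ξ := by gcongr; exact hξ.1
    _ = 2 / π ^ 2 * (x⁻¹ * ξ) ^ 2 / ξ := by field_simp
    _ ≤ (1 - Real.cos (x⁻¹ * ξ)) / ξ := by gcongr; linarith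

lemma sub_two_mul_le_integral_sineTransform (heven : h.Even) (hdiff : Differentiable ℝ h)
    (hanti : AntitoneOn h (Ici 0)) (hint : Integrable (deriv h)) {x : ℝ} (hx : 0 < x) :
    2 / (π ^ 2 * x) * (h x - h (2 * x)) ≤ ∫ y in 0..x⁻¹, sineTransform (-deriv h) y := by
  have hle : x ≤ 2 * x := by linarith
  have hkernel := integrable_one_sub_cos_div_mul hint.neg x⁻¹
  calc 2 / (π ^ 2 * x) * (h x - h (2 * x))
      = ∫ ξ in Ioc x (2 * x), 2 / (π ^ 2 * x) * -deriv h ξ := by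
        rw [integral_const_mul, integral_neg, ← intervalIntegral.integral_of_le hle,
          intervalIntegral.integral_deriv_eq_sub (fun ξ _ ↦ hdiff ξ) hint.intervalIntegrable,
          neg_sub]
    _ ≤ ∫ ξ in Ioc x (2 * x), (1 - Real.cos (x⁻¹ * ξ)) / ξ * -deriv h ξ := by
        refine setIntegral_mono_on (hint.neg.const_mul _).integrableOn hkernel.integrableOn
          measurableSet_Ioc fun ξ hξ ↦ ?_
        exact mul_le_mul_of_nonneg_right (le_one_sub_cos_div hx (Ioc_subset_Icc_self hξ))
          (neg_nonneg.2 (deriv_nonpos_of_antitoneOn_Ici hanti (hx.trans hξ.1)))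
    _ ≤ ∫ ξ, (1 - Real.cos (x⁻¹ * ξ)) / ξ * -deriv h ξ :=
        setIntegral_le_integral hkernel
          (.of_forall (one_sub_cos_div_mul_neg_deriv_nonneg heven hanti x⁻¹))
    _ = ∫ y in 0..x⁻¹, sineTransform (-deriv h) y := (integral_sineTransform hint.neg x⁻¹).symm

end EvenAntitone

lemma integral_le_rpow_mul_one_add_integral_sq {P G : ℝ → ℝ} {r : ℝ} (hr : 0 < r)
    (hP : IntervalIntegrable P volume 0 r) (hG : IntegrableOn (fun y ↦ G y ^ 2) (Ioo 0 r))
    (hPG : ∀ y ∈ Ioo 0 r, P y ≤ y * G y) :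
    ∫ y in 0..r, P y ≤ r ^ (3 / 2 : ℝ) * (1 + ∫ y in Ioo 0 r, G y ^ 2) := by
  set s := r ^ (3 / 2 : ℝ) with hs
  have hs0 : 0 < s := by positivity
  have hs2 : s * s = r ^ 3 := by
    rw [hs, ← Real.rpow_add hr, ← Real.rpow_natCast]
    norm_num
  have hG' : IntervalIntegrable (fun y ↦ s * G y ^ 2) volume 0 r :=
    ((intervalIntegrable_iff_integrableOn_Ioo_of_le hr.le).2 hG).const_mul s
  -- AM-GM, with the weight `s` chosen to balance the two resulting integrals.
  have hamgm (y : ℝ) (hy : y ∈ Ioo 0 r) : P y ≤ s * G y ^ 2 + r ^ 2 / s := by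
    have hyr : y ^ 2 ≤ r ^ 2 := pow_le_pow_left₀ hy.1.le hy.2.le 2
    refine (hPG y hy).trans ?_
    rw [← sub_le_iff_le_add', le_div_iff₀ hs0]
    nlinarith [sq_nonneg (y - 2 * (s * G y))]
  calc ∫ y in 0..r, P y ≤ ∫ y in 0..r, (s * G y ^ 2 + r ^ 2 / s) :=
        intervalIntegral.integral_mono_on_of_le_Ioo hr.le hP
          (hG'.add intervalIntegrable_const) hamgm
    _ = s * (∫ y in Ioo 0 r, G y ^ 2) + r ^ 3 / s := by
        rw [intervalIntegral.integral_add hG' intervalIntegrable_const,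
          intervalIntegral.integral_const_mul, intervalIntegral.integral_of_le hr.le,
          integral_Ioc_eq_integral_Ioo, intervalIntegral.integral_const, smul_eq_mul]
        ring
    _ = s * (1 + ∫ y in Ioo 0 r, G y ^ 2) := by
        rw [← hs2]
        field_simp
        ring

lemma nonpos_of_tendsto_zero_of_le_two_mul {φ : ℝ → ℝ} {x₀ x : ℝ} (hx₀ : 0 < x₀)
    (hφ : ∀ x ≥ x₀, φ x ≤ φ (2 * x)) (hlim : Tendsto φ atTop (𝓝 0)) (hx : x₀ ≤ x) :
    φ x ≤ 0 := by
  have hx0 : 0 < x := hx₀.trans_le hx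
  have hmono : Monotone fun n : ℕ ↦ φ (2 ^ n * x) := monotone_nat_of_le_succ fun n ↦ by
    rw [pow_succ', mul_assoc]
    exact hφ _ (hx.trans (le_mul_of_one_le_left hx0.le (one_le_pow₀ one_le_two)))
  have hlim' : Tendsto (fun n : ℕ ↦ φ (2 ^ n * x)) atTop (𝓝 0) :=
    hlim.comp ((tendsto_pow_atTop_atTop_of_one_lt one_lt_two).atTop_mul_const hx0)
  simpa using hmono.ge_of_tendsto hlim' 0

lemma le_rpow_neg_of_sub_two_mul_le {h : ℝ → ℝ} {p C x₀ x : ℝ} (hp : 0 < p) (hx₀ : 0 < x₀)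
    (hlim : Tendsto h atTop (𝓝 0)) (hsub : ∀ x ≥ x₀, h x - h (2 * x) ≤ C * x ^ (-p))
    (hx : x₀ ≤ x) : h x ≤ C / (1 - 2 ^ (-p)) * x ^ (-p) := by
  have h2p : (2 : ℝ) ^ (-p) < 1 := Real.rpow_lt_one_of_one_lt_of_neg one_lt_two (neg_lt_zero.2 hp)
  set K := C / (1 - 2 ^ (-p)) with hK
  -- `K` is chosen so that subtracting `K * x ^ (-p)` from `h x` absorbs the error term.
  have hKC : C = K - K * 2 ^ (-p) := by
    rw [hK]
    field_simp [(sub_pos.2 h2p).ne']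
  refine sub_nonpos.1 (nonpos_of_tendsto_zero_of_le_two_mul
    (φ := fun x ↦ h x - K * x ^ (-p)) hx₀ (fun x hx ↦ ?_) ?_ hx)
  · have := hsub x hx
    rw [hKC] at this
    rw [Real.mul_rpow zero_le_two (hx₀.le.trans hx)]
    linarith
  · simpa using hlim.sub ((tendsto_rpow_neg_atTop hp).const_mul K)

section FourierIntegral

variable {h : ℝ → ℝ} {G : ℝ → ℂ} {δ : ℝ}

lemma integral_sineTransform_neg_deriv_le_rpow (heven : h.Even) (hdiff : Differentiable ℝ h)
    (hint : Integrable (deriv h)) (hlim : Tendsto h atTop (𝓝 0))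
    (hG : ∀ y ∈ Ioo 0 δ, Tendsto (fun R : ℝ ↦ ∫ ξ in -R..R, cexp ((y * ξ : ℝ) * I) * h ξ) atTop
      (𝓝 (G y)))
    (hGint : IntegrableOn (fun y ↦ ‖G y‖ ^ 2) (Ioo 0 δ)) {r : ℝ} (hr : 0 < r) (hrδ : r ≤ δ) :
    ∫ y in 0..r, sineTransform (-deriv h) y ≤
      r ^ (3 / 2 : ℝ) * (1 + ∫ y in Ioo 0 δ, ‖G y‖ ^ 2) := by
  have hsub : Ioo 0 r ⊆ Ioo 0 δ := Ioo_subset_Ioo_right hrδ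
  have hle (y : ℝ) (hy : y ∈ Ioo 0 r) : sineTransform (-deriv h) y ≤ y * ‖G y‖ := by
    rw [← div_le_iff₀' hy.1,
      ← re_eq_sineTransform_div_of_tendsto heven hdiff hint hlim hy.1.ne' (hG y (hsub hy))]
    exact re_le_norm _
  calc ∫ y in 0..r, sineTransform (-deriv h) y
      ≤ r ^ (3 / 2 : ℝ) * (1 + ∫ y in Ioo 0 r, ‖G y‖ ^ 2) :=
        integral_le_rpow_mul_one_add_integral_sq hr
          ((continuous_sineTransform hint.neg).intervalIntegrable 0 r) (hGint.mono_set hsub) hle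
    _ ≤ r ^ (3 / 2 : ℝ) * (1 + ∫ y in Ioo 0 δ, ‖G y‖ ^ 2) := by
        gcongr
        exact .of_forall fun y ↦ sq_nonneg ‖G y‖

theorem isBigO_rpow_of_integrableOn_norm_sq (heven : h.Even) (hdiff : Differentiable ℝ h)
    (hanti : AntitoneOn h (Ici 0)) (hlim : Tendsto h atTop (𝓝 0)) (hδ : 0 < δ)
    (hG : ∀ y ∈ Ioo 0 δ, Tendsto (fun R : ℝ ↦ ∫ ξ in -R..R, cexp ((y * ξ : ℝ) * I) * h ξ) atTop
      (𝓝 (G y)))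
    (hGint : IntegrableOn (fun y ↦ ‖G y‖ ^ 2) (Ioo 0 δ)) :
    h =O[atTop] fun x ↦ x ^ (-(1 / 2) : ℝ) := by
  have hint := integrable_deriv_of_even_of_antitoneOn heven hdiff hanti hlim
  set J := ∫ y in Ioo 0 δ, ‖G y‖ ^ 2
  have hdyadic (x : ℝ) (hx : x ≥ δ⁻¹) :
      h x - h (2 * x) ≤ π ^ 2 / 2 * (1 + J) * x ^ (-(1 / 2) : ℝ) := by
    have hx0 : 0 < x := (inv_pos.2 hδ).trans_le hx
    have hbound := (sub_two_mul_le_integral_sineTransform heven hdiff hanti hint hx0).trans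
      (integral_sineTransform_neg_deriv_le_rpow heven hdiff hint hlim hG hGint (inv_pos.2 hx0)
        (inv_le_of_inv_le₀ hδ hx))
    have hpow : x * x⁻¹ ^ (3 / 2 : ℝ) = x ^ (-(1 / 2) : ℝ) := by
      rw [Real.inv_rpow hx0.le, ← Real.rpow_neg hx0.le]
      nth_rw 1 [← Real.rpow_one x]
      rw [← Real.rpow_add hx0]
      norm_num
    calc h x - h (2 * x) = π ^ 2 / 2 * x * (2 / (π ^ 2 * x) * (h x - h (2 * x))) := by field_simp
      _ ≤ π ^ 2 / 2 * x * (x⁻¹ ^ (3 / 2 : ℝ) * (1 + J)) := by gcongr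
      _ = π ^ 2 / 2 * (1 + J) * x ^ (-(1 / 2) : ℝ) := by rw [← hpow]; ring
  refine .of_bound (π ^ 2 / 2 * (1 + J) / (1 - 2 ^ (-(1 / 2) : ℝ))) ?_
  filter_upwards [eventually_ge_atTop δ⁻¹, eventually_ge_atTop 0] with x hx hx0
  have hnonneg : 0 ≤ h x := le_of_tendsto hlim <| (eventually_ge_atTop x).mono fun z hz ↦
    hanti hx0 (hx0.trans hz) hz
  rw [Real.norm_of_nonneg hnonneg, Real.norm_of_nonneg (by positivity)]
  exact le_rpow_neg_of_sub_two_mul_le (by norm_num) (inv_pos.2 hδ) hlim hdyadic hx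

end FourierIntegral

section BesselLogWeight

/-- The Fourier multiplier `(1 + ξ²)^(-a) (1 + log (1 + ξ²))^(-b)` of a Bessel potential of order
`2a` with a logarithmic correction of order `b`. In the notation of the theorem,
`(1 + ξ²)^(ε/2) |f̂(ξ)|` is the case `a = 1/4 - ε/2`, `b = 2`. -/
noncomputable def besselLogWeight (a b ξ : ℝ) : ℝ :=
  (1 + ξ ^ 2) ^ (-a) * (1 + Real.log (1 + ξ ^ 2)) ^ (-b)

lemma one_le_one_add_log_one_add_sq (ξ : ℝ) : 1 ≤ 1 + Real.log (1 + ξ ^ 2) :=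
  le_add_of_nonneg_right (Real.log_nonneg (le_add_of_nonneg_right (sq_nonneg ξ)))

lemma one_add_log_one_add_sq_pos (ξ : ℝ) : 0 < 1 + Real.log (1 + ξ ^ 2) :=
  one_pos.trans_le (one_le_one_add_log_one_add_sq ξ)

lemma besselLogWeight_pos (a b ξ : ℝ) : 0 < besselLogWeight a b ξ :=
  mul_pos (by positivity) (Real.rpow_pos_of_pos (one_add_log_one_add_sq_pos ξ) _)

lemma even_besselLogWeight (a b : ℝ) : (besselLogWeight a b).Even := fun ξ ↦ by
  simp [besselLogWeight]

lemma differentiable_besselLogWeight (a b : ℝ) : Differentiable ℝ (besselLogWeight a b) := by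
  have hbase (ξ : ℝ) : 1 + ξ ^ 2 ≠ 0 := by positivity
  have hlog : Differentiable ℝ fun ξ : ℝ ↦ 1 + Real.log (1 + ξ ^ 2) :=
    (Differentiable.log (by fun_prop) hbase).const_add 1
  exact (Differentiable.rpow_const (by fun_prop) fun ξ ↦ .inl (hbase ξ)).mul
    (hlog.rpow_const fun ξ ↦ .inl (one_add_log_one_add_sq_pos ξ).ne')

lemma antitoneOn_besselLogWeight {a b : ℝ} (ha : 0 ≤ a) (hb : 0 ≤ b) :
    AntitoneOn (besselLogWeight a b) (Ici 0) := fun x hx y _ hxy ↦ by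
  have hsq : 1 + x ^ 2 ≤ 1 + y ^ 2 := by gcongr
  have hlog : 1 + Real.log (1 + x ^ 2) ≤ 1 + Real.log (1 + y ^ 2) := by gcongr
  exact mul_le_mul (Real.rpow_le_rpow_of_nonpos (by positivity) hsq (neg_nonpos.2 ha))
    (Real.rpow_le_rpow_of_nonpos (one_add_log_one_add_sq_pos x) hlog (neg_nonpos.2 hb))
    (Real.rpow_nonneg (one_add_log_one_add_sq_pos y).le _) (by positivity)

lemma besselLogWeight_le_one_add_log_rpow {a : ℝ} (ha : 0 ≤ a) (b ξ : ℝ) :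
    besselLogWeight a b ξ ≤ (1 + Real.log (1 + ξ ^ 2)) ^ (-(a + b)) := by
  have hpos := one_add_log_one_add_sq_pos ξ
  have hle : 1 + Real.log (1 + ξ ^ 2) ≤ 1 + ξ ^ 2 := by
    linarith [Real.log_le_sub_one_of_pos (by positivity : 0 < 1 + ξ ^ 2)]
  rw [neg_add, Real.rpow_add hpos]
  exact mul_le_mul_of_nonneg_right (Real.rpow_le_rpow_of_nonpos hpos hle (neg_nonpos.2 ha))
    (Real.rpow_nonneg hpos.le _)

lemma tendsto_one_add_sq_atTop : Tendsto (fun x : ℝ ↦ 1 + x ^ 2) atTop atTop :=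
  tendsto_atTop_add_const_left _ _ (tendsto_pow_atTop two_ne_zero)

lemma tendsto_one_add_log_one_add_sq_atTop :
    Tendsto (fun x : ℝ ↦ 1 + Real.log (1 + x ^ 2)) atTop atTop :=
  tendsto_atTop_add_const_left _ _ (Real.tendsto_log_atTop.comp tendsto_one_add_sq_atTop)

lemma tendsto_besselLogWeight_atTop {a b : ℝ} (ha : 0 ≤ a) (hab : 0 < a + b) :
    Tendsto (besselLogWeight a b) atTop (𝓝 0) :=
  squeeze_zero (fun ξ ↦ (besselLogWeight_pos a b ξ).le) (besselLogWeight_le_one_add_log_rpow ha b)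
    ((tendsto_rpow_neg_atTop hab).comp tendsto_one_add_log_one_add_sq_atTop)

lemma tendsto_one_add_sq_rpow_mul_besselLogWeight {a c : ℝ} (hac : a < c) (b : ℝ) :
    Tendsto (fun x ↦ (1 + x ^ 2) ^ c * besselLogWeight a b x) atTop atTop := by
  have hexp := ((tendsto_exp_mul_div_rpow_atTop b (c - a) (sub_pos.2 hac)).comp
    tendsto_one_add_log_one_add_sq_atTop).const_mul_atTop (Real.exp_pos (-(c - a)))
  refine hexp.congr fun x ↦ ?_
  have hpos : 0 < 1 + x ^ 2 := by positivity
  rw [Function.comp_apply, ← mul_div_assoc, ← Real.exp_add, div_eq_mul_inv,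
    ← Real.rpow_neg (one_add_log_one_add_sq_pos x).le, besselLogWeight, ← mul_assoc,
    ← Real.rpow_add hpos, Real.rpow_def_of_pos hpos]
  ring_nf

lemma not_isBigO_besselLogWeight {a c : ℝ} (hac : 2 * a < c) (b : ℝ) :
    ¬ besselLogWeight a b =O[atTop] fun x ↦ x ^ (-c) := fun hO ↦ by
  have hbase : (fun x : ℝ ↦ (1 + x ^ 2) ^ (c / 2)) =O[atTop] fun x ↦ (x ^ 2) ^ (c / 2) := by
    have hone : (fun _ ↦ 1 : ℝ → ℝ) =o[atTop] fun x ↦ x ^ 2 :=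
      isLittleO_const_left.2 (.inr (tendsto_norm_atTop_atTop.comp (tendsto_pow_atTop two_ne_zero)))
    exact ((hone.add_isEquivalent .refl).isTheta.rpow
      (.of_forall fun x ↦ add_nonneg zero_le_one (sq_nonneg x)) (.of_forall sq_nonneg)).isBigO
  have hlim := tendsto_one_add_sq_rpow_mul_besselLogWeight ((lt_div_iff₀' two_pos).2 hac) b
  have hbdd : (fun x ↦ (1 + x ^ 2) ^ (c / 2) * besselLogWeight a b x) =O[atTop]
      fun _ ↦ (1 : ℝ) := by
    refine (hbase.mul hO).congr' .rfl ?_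
    filter_upwards [eventually_gt_atTop 0] with x hx
    rw [← Real.rpow_natCast, ← Real.rpow_mul hx.le, ← Real.rpow_add hx]
    simp [mul_div_cancel₀]
  exact not_isBoundedUnder_of_tendsto_atTop (tendsto_norm_atTop_atTop.comp hlim)
    ((isBigO_one_iff ℝ).1 hbdd)

end BesselLogWeight

theorem lambda_eps_f_not_locally_L2_near_minus_fifty_general {a b : ℝ} (ha : 0 ≤ a)
    (ha' : a < 1 / 4) (hb : 0 ≤ b) (hab : 0 < a + b) {ω d : ℝ} (hd : -ω < d) {g : ℝ → ℂ}
    (hg : ∀ x ∈ Ioo (-ω) d, Tendsto (fun R : ℝ ↦ (1 / (2 * π)) * ∫ ξ in -R..R,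
      cexp (I * x * ξ) * (cexp (ω * I * ξ) * besselLogWeight a b ξ)) atTop (𝓝 (g x))) :
    ¬ IntegrableOn (fun x ↦ ‖g x‖ ^ 2) (Ioo (-ω) d) := fun hI ↦ by
  have hG (y : ℝ) (hy : y ∈ Ioo 0 (d + ω)) :
      Tendsto (fun R : ℝ ↦ ∫ ξ in -R..R, cexp ((y * ξ : ℝ) * I) * besselLogWeight a b ξ) atTop
        (𝓝 (2 * π * g (y - ω))) := by
    refine ((hg (y - ω) ⟨by linarith [hy.1], by linarith [hy.2]⟩).const_mul (2 * π : ℂ)).congr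
      fun R ↦ ?_
    rw [← mul_assoc, mul_one_div_cancel (by simp [Real.pi_ne_zero]), one_mul]
    congr! 2 with ξ
    rw [← mul_assoc, ← Complex.exp_add]
    push_cast
    ring_nf
  have hGint : IntegrableOn (fun y ↦ ‖2 * π * g (y - ω)‖ ^ 2) (Ioo 0 (d + ω)) := by
    simp_rw [norm_mul, mul_pow]
    rw [← (measurePreserving_sub_right volume ω).integrableOn_comp_preimage
      (Homeomorph.subRight ω).measurableEmbedding] at hI
    simpa [IntegrableOn, Function.comp_def] using hI.const_mul (2 ^ 2 * π ^ 2)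
  exact not_isBigO_besselLogWeight (by linarith) b <|
    isBigO_rpow_of_integrableOn_norm_sq (even_besselLogWeight a b)
      (differentiable_besselLogWeight a b) (antitoneOn_besselLogWeight ha hb)
      (tendsto_besselLogWeight_atTop ha hab) (by linarith) hG hGint

/-- The inverse Fourier transform `g` of `(1+ξ²)^{ε/2} f̂(ξ)`, where
`f̂(ξ) = e^{50iξ}(1+ξ²)^{-1/4}(1+log(1+ξ²))^{-2}`, is not square-integrable on any
open interval containing `-50`.  Here `g` is characterized pointwise away from
`x = -50` as the limit of the truncated inverse Fourier integrals. -/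
theorem lambda_eps_f_not_locally_L2_near_minus_fifty
    (ε : ℝ) (hε : 0 < ε) (hε' : ε < 1 / 2) (g : ℝ → ℂ)
    (hg : ∀ x : ℝ, x ≠ -50 →
      Tendsto (fun R : ℝ => (1 / (2 * π)) * ∫ ξ in (-R)..R,
          Complex.exp (Complex.I * x * ξ) *
            (Complex.exp (50 * Complex.I * ξ) *
              (((1 + ξ ^ 2) ^ (ε / 2 - 1 / 4) * (1 + Real.log (1 + ξ ^ 2)) ^ (-(2 : ℝ)) : ℝ) : ℂ)))
        atTop (nhds (g x))) :
    ∀ c d : ℝ, c < -50 → -50 < d →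
      ¬ IntegrableOn (fun x : ℝ => ‖g x‖ ^ 2) (Set.Ioo c d) := by
  intro c d hc hd hI
  refine lambda_eps_f_not_locally_L2_near_minus_fifty_general (a := 1 / 4 - ε / 2) (b := 2)
    (by linarith) (by linarith) zero_le_two (by linarith) hd (fun x hx ↦ ?_)
    (hI.mono_set (Ioo_subset_Ioo_left hc.le))
  simpa only [besselLogWeight, neg_sub, ofReal_ofNat] using hg x hx.1.ne'
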